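/- Let f be a homogeneous cubic polynomial on V and G = {g ∈ GL(V) : f ∘ g = χ(g)·f for some scalar χ(g) ≠ 0} the group of linear symmetries of {f = 0}. If f admits a polynomial multiplicative Legendre transform f_* (so that τ_{f,A} is invertible for f(A) ≠ 0, with inverse τ_{f_*, f'(A)/f(A)}), then for any A, A' with f(A) ≠ 0 ≠ f(A'), the composite (τ_{f,A'})^{-1} ∘ τ_{f,A} ∈ GL(V) maps the affine cone over {f = 0} to itself, i.e., lies in G. -/

import Mathlib

section Homogeneous

variable {E F : Type*} [NormedAddCommGroup E] [NormedSpace ℂ E]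
  [NormedAddCommGroup F] [NormedSpace ℂ F]

/-- The derivative of a homogeneous map of degree `k + 1` is homogeneous of degree `k`. -/
theorem fderiv_smul_of_homogeneous {φ : E → F} (hφ : Differentiable ℂ φ) {k : ℕ}
    (h : ∀ c : ℂ, c ≠ 0 → ∀ x, φ (c • x) = c ^ (k + 1) • φ x) (c : ℂ) (hc : c ≠ 0) (x : E) :
    fderiv ℂ φ (c • x) = c ^ k • fderiv ℂ φ x := by
  have h₁ : HasFDerivAt (fun y => φ (c • y))
      ((fderiv ℂ φ (c • x)).comp (c • ContinuousLinearMap.id ℂ E)) x :=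
    (hφ (c • x)).hasFDerivAt.comp x ((hasFDerivAt_id x).const_smul c)
  have h₂ : HasFDerivAt (fun y => φ (c • y)) (c ^ (k + 1) • fderiv ℂ φ x) x := by
    simp only [h c hc]
    exact (hφ x).hasFDerivAt.const_smul _
  have h₃ := h₁.unique h₂
  ext y
  have h₄ := DFunLike.congr_fun h₃ y
  simp only [ContinuousLinearMap.comp_apply, smul_apply,
    ContinuousLinearMap.id_apply, map_smul, pow_succ', mul_smul] at h₄
  exact smul_right_injective F hc h₄

/-- Euler's identity for homogeneous maps. -/
theorem fderiv_apply_self_of_homogeneous {φ : E → F} (hφ : Differentiable ℂ φ) {k : ℕ}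
    (h : ∀ c : ℂ, c ≠ 0 → ∀ x, φ (c • x) = c ^ k • φ x) (x : E) :
    fderiv ℂ φ x x = (k : ℂ) • φ x := by
  have h₀ : HasDerivAt (fun t : ℂ => t • x) x 1 := by
    simpa using (hasDerivAt_id (1 : ℂ)).smul_const x
  have h₁ : HasDerivAt (fun t : ℂ => φ (t • x)) (fderiv ℂ φ x x) 1 := by
    have h' : HasFDerivAt φ (fderiv ℂ φ x) ((1 : ℂ) • x) := by
      simpa using (hφ x).hasFDerivAt
    exact h'.comp_hasDerivAt (1 : ℂ) h₀
  have h₂ : HasDerivAt (fun t : ℂ => φ (t • x)) ((k : ℂ) • φ x) 1 := by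
    have h' : HasDerivAt (fun t : ℂ => t ^ k • φ x) ((k : ℂ) • φ x) 1 := by
      simpa using (hasDerivAt_pow k (1 : ℂ)).smul_const (φ x)
    refine h'.congr_of_eventuallyEq ?_
    filter_upwards [isOpen_ne.mem_nhds (one_ne_zero : (1 : ℂ) ≠ 0)] with t ht
    exact h t ht x
  exact h₁.unique h₂

/-- A differentiable map that is homogeneous of degree one is its own derivative at the origin. -/
theorem fderiv_zero_apply_of_homogeneous {φ : E → F} (hφ : Differentiable ℂ φ)
    (h : ∀ c : ℂ, c ≠ 0 → ∀ x, φ (c • x) = c • φ x) (x : E) :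
    fderiv ℂ φ 0 x = φ x := by
  have h0 : φ 0 = 0 := by
    have h2 := h 2 two_ne_zero 0
    rw [smul_zero, two_smul] at h2
    simpa using h2
  have h₀ : HasDerivAt (fun t : ℂ => t • x) x 0 := by
    simpa using (hasDerivAt_id (0 : ℂ)).smul_const x
  have h₁ : HasDerivAt (fun t : ℂ => φ (t • x)) (fderiv ℂ φ 0 x) 0 := by
    have h' : HasFDerivAt φ (fderiv ℂ φ 0) ((0 : ℂ) • x) := by
      simpa using (hφ 0).hasFDerivAt
    exact h'.comp_hasDerivAt (0 : ℂ) h₀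
  have h₂ : HasDerivAt (fun t : ℂ => φ (t • x)) (φ x) 0 := by
    have h' : HasDerivAt (fun t : ℂ => t • φ x) (φ x) 0 := by
      simpa using (hasDerivAt_id (0 : ℂ)).smul_const (φ x)
    refine h'.congr_of_eventuallyEq (Filter.Eventually.of_forall fun t => ?_)
    by_cases ht : t = 0
    · simp [ht, h0]
    · exact h t ht x
  exact h₁.unique h₂

/-- A smooth homogeneous function of degree three comes from a symmetric trilinear form. -/
theorem exists_trilinear_of_cubic {f : E → ℂ} (hf : ContDiff ℂ ⊤ f)
    (h : ∀ (c : ℂ) (x : E), f (c • x) = c ^ 3 * f x) :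
    ∃ B : E →L[ℂ] E →L[ℂ] E →L[ℂ] ℂ,
      (∀ x y z, B x y z = B y x z) ∧ (∀ x y z, B x y z = B x z y) ∧
      (∀ x, f x = B x x x / 6) ∧ (∀ x, fderiv ℂ f x = (2 : ℂ)⁻¹ • B x x) ∧
      ∀ x, HasFDerivAt (fderiv ℂ f) (B x) x := by
  have hf₁ : ContDiff ℂ ⊤ (fderiv ℂ f) := hf.fderiv_right (by simp)
  have hf₂ : ContDiff ℂ ⊤ (fderiv ℂ (fderiv ℂ f)) := hf₁.fderiv_right (by simp)
  have d₀ := hf.differentiable (by simp)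
  have d₁ := hf₁.differentiable (by simp)
  have d₂ := hf₂.differentiable (by simp)
  have k₀ : ∀ c : ℂ, c ≠ 0 → ∀ x, f (c • x) = c ^ (2 + 1) • f x := fun c _ x => h c x
  have k₁ := fderiv_smul_of_homogeneous d₀ k₀
  have k₂ := fderiv_smul_of_homogeneous (k := 1) d₁ k₁
  have hB := fderiv_zero_apply_of_homogeneous d₂ (by simpa using k₂)
  have e₁ : ∀ x, fderiv ℂ f x = (2 : ℂ)⁻¹ • fderiv ℂ (fderiv ℂ (fderiv ℂ f)) 0 x x := by
    intro x
    rw [hB, fderiv_apply_self_of_homogeneous d₁ k₁, smul_smul]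
    norm_num
  refine ⟨fderiv ℂ (fderiv ℂ (fderiv ℂ f)) 0, fun x y z => ?_, fun x y z => ?_, fun x => ?_,
    e₁, fun x => ?_⟩
  · have hs : IsSymmSndFDerivAt ℂ (fderiv ℂ f) 0 := hf₁.contDiffAt.isSymmSndFDerivAt (by simp)
    rw [hs.eq x y]
  · have hs : IsSymmSndFDerivAt ℂ f x := hf.contDiffAt.isSymmSndFDerivAt (by simp)
    rw [hB]
    exact hs.eq y z
  · have e₀ := fderiv_apply_self_of_homogeneous d₀ k₀ x
    rw [e₁] at e₀
    simp only [smul_apply, smul_eq_mul] at e₀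
    push_cast at e₀
    linear_combination (-1 / 3 : ℂ) * e₀
  · rw [hB]
    exact (d₁ x).hasFDerivAt

end Homogeneous

/-- A polynomial function of degree at most four vanishing near `0` has vanishing
coefficients of degree at most two. -/
theorem coeff_eq_zero_of_eventually_quartic_eq_zero {c₀ c₁ c₂ c₃ c₄ : ℂ}
    (h : ∀ᶠ t : ℂ in nhds 0, c₀ + c₁ * t + c₂ * t ^ 2 + c₃ * t ^ 3 + c₄ * t ^ 4 = 0) :
    c₀ = 0 ∧ c₁ = 0 ∧ c₂ = 0 := by
  open Polynomial in
  have hp : (C c₀ + C c₁ * X + C c₂ * X ^ 2 + C c₃ * X ^ 3 + C c₄ * X ^ 4 : ℂ[X]) = 0 := by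
    refine Polynomial.eq_zero_of_infinite_isRoot _ ?_
    refine (infinite_of_mem_nhds (0 : ℂ) h).mono fun t ht => ?_
    simpa [Polynomial.IsRoot] using ht
  have hc := fun n => congrArg (fun p => Polynomial.coeff p n) hp
  refine ⟨?_, ?_, ?_⟩
  · simpa [Polynomial.coeff_X, Polynomial.coeff_C] using hc 0
  · simpa [Polynomial.coeff_X, Polynomial.coeff_C] using hc 1
  · simpa [Polynomial.coeff_X, Polynomial.coeff_C] using hc 2

section Legendre

set_option maxSynthPendingDepth 3

variable {V : Type*} [NormedAddCommGroup V] [NormedSpace ℂ V]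

/-- The derivative of the logarithmic gradient of a twice differentiable function. -/
theorem fderiv_inv_smul_fderiv_apply {f : V → ℂ} (hf : Differentiable ℂ f)
    {A : V} (hA : f A ≠ 0) {L : V →L[ℂ] V →L[ℂ] ℂ} (hL : HasFDerivAt (fderiv ℂ f) L A) (x : V) :
    HasFDerivAt (fun y => (f y)⁻¹ • fderiv ℂ f y)
      (fderiv ℂ (fun y => (f y)⁻¹ • fderiv ℂ f y) A) A ∧
    fderiv ℂ (fun y => (f y)⁻¹ • fderiv ℂ f y) A x =
      (f A)⁻¹ • L x - ((f A ^ 2)⁻¹ * fderiv ℂ f A x) • fderiv ℂ f A := by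
  have hi : HasFDerivAt (fun y => (f y)⁻¹) (-(f A ^ 2)⁻¹ • fderiv ℂ f A) A :=
    (hasDerivAt_inv hA).comp_hasFDerivAt A (hf A).hasFDerivAt
  have h := hi.smul hL
  refine ⟨h.differentiableAt.hasFDerivAt, ?_⟩
  rw [show fderiv ℂ (fun y => (f y)⁻¹ • fderiv ℂ f y) A = _ from h.fderiv]
  ext z
  simp
  ring

/-- The gradient of `f_*` at `f'(y)` is proportional to `y`, in terms of the trilinear forms
`B` of `f` and `C` of `f_*`. -/
theorem legendre_gradient_apply {f : V → ℂ} (hf : ContDiff ℂ ⊤ f)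
    {fstar : (V →L[ℂ] ℂ) → ℂ} (hfs : ContDiff ℂ ⊤ fstar)
    (hdef : ∀ x : V, f x ≠ 0 → fstar ((f x)⁻¹ • fderiv ℂ f x) = (f x)⁻¹)
    (hsurj : ∀ A : V, f A ≠ 0 →
      Function.Surjective (fderiv ℂ (fun x : V => (f x)⁻¹ • fderiv ℂ f x) A))
    {B : V →L[ℂ] V →L[ℂ] V →L[ℂ] ℂ} (B₂ : ∀ x y z, B x y z = B x z y)
    (Bf : ∀ x, f x = B x x x / 6) (Bd : ∀ x, fderiv ℂ f x = (2 : ℂ)⁻¹ • B x x)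
    (Bdd : ∀ x, HasFDerivAt (fderiv ℂ f) (B x) x)
    {C : (V →L[ℂ] ℂ) →L[ℂ] (V →L[ℂ] ℂ) →L[ℂ] (V →L[ℂ] ℂ) →L[ℂ] ℂ}
    (Cd : ∀ ξ, fderiv ℂ fstar ξ = (2 : ℂ)⁻¹ • C ξ ξ)
    {y : V} (hy : f y ≠ 0) (η : V →L[ℂ] ℂ) : C (B y y) (B y y) η = 8 * f y * η y := by
  have df := hf.differentiable (by simp)
  have dfs := hfs.differentiable (by simp)
  obtain ⟨v, rfl⟩ := hsurj y hy η
  obtain ⟨hτ, hτv⟩ := fderiv_inv_smul_fderiv_apply df hy (Bdd y) v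
  have h₁ := (dfs ((f y)⁻¹ • fderiv ℂ f y)).hasFDerivAt.comp y hτ
  have h₂ : HasFDerivAt (fun z => (f z)⁻¹) (-(f y ^ 2)⁻¹ • fderiv ℂ f y) y :=
    (hasDerivAt_inv hy).comp_hasFDerivAt y (df y).hasFDerivAt
  have h₃ : HasFDerivAt (fstar ∘ fun z => (f z)⁻¹ • fderiv ℂ f z)
      (-(f y ^ 2)⁻¹ • fderiv ℂ f y) y := by
    refine h₂.congr_of_eventuallyEq ?_
    filter_upwards [hf.continuous.continuousAt.eventually_ne hy] with z hz
    exact hdef z hz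
  have h₄ := DFunLike.congr_fun (h₁.unique h₃) v
  rw [ContinuousLinearMap.comp_apply] at h₄
  have h₅ : (fderiv ℂ (fun z => (f z)⁻¹ • fderiv ℂ f z) y v) y =
      -(f y)⁻¹ * fderiv ℂ f y v := by
    rw [hτv]
    have hb : B y v y = B y y v := B₂ y v y
    have hyy : B y y y = 6 * f y := by rw [Bf]; ring
    simp [Bd, hb, hyy]
    field_simp
    ring
  rw [h₅]
  generalize fderiv ℂ (fun z => (f z)⁻¹ • fderiv ℂ f z) y v = ζ at h₄
  rw [Cd, Bd] at h₄
  simp only [map_smul, smul_apply, smul_eq_mul] at h₄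
  rw [Bd]
  simp only [smul_apply, smul_eq_mul]
  field_simp at h₄ ⊢
  linear_combination 2 * h₄

/-- The identity `f_*'(f'(y)) = f(y) y`, expanded along `y = A + t x` up to order two. -/
theorem legendre_gradient_expansion {f : V → ℂ} (hf : Continuous f)
    {B : V →L[ℂ] V →L[ℂ] V →L[ℂ] ℂ} (B₁ : ∀ x y z, B x y z = B y x z)
    (B₂ : ∀ x y z, B x y z = B x z y) (Bf : ∀ x, f x = B x x x / 6)
    {C : (V →L[ℂ] ℂ) →L[ℂ] (V →L[ℂ] ℂ) →L[ℂ] (V →L[ℂ] ℂ) →L[ℂ] ℂ}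
    (C₁ : ∀ ξ ζ η, C ξ ζ η = C ζ ξ η)
    (key : ∀ y, f y ≠ 0 → ∀ η : V →L[ℂ] ℂ, C (B y y) (B y y) η = 8 * f y * η y)
    {A : V} (hA : f A ≠ 0) (x : V) (η : V →L[ℂ] ℂ) :
    C (B A A) (B A A) η = 8 * f A * η A ∧
    4 * C (B A A) (B A x) η = 8 * (f A * η x + B A A x / 2 * η A) ∧
    4 * C (B A x) (B A x) η + 2 * C (B A A) (B x x) η =
      8 * (B A A x / 2 * η x + B A x x / 2 * η A) := by
  have hev : ∀ᶠ t : ℂ in nhds 0, f (A + t • x) ≠ 0 := by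
    have hc : ContinuousAt (fun t : ℂ => f (A + t • x)) 0 := by
      fun_prop
    exact hc.eventually_ne (by simpa using hA)
  have hb₁ : B x A = B A x := by ext z; exact B₁ x A z
  have hb₂ : B x x A = B A x x := by rw [B₂, hb₁]
  have hc₁ : ∀ ξ ζ, C ξ ζ η = C ζ ξ η := fun ξ ζ => C₁ ξ ζ η
  obtain ⟨h₀, h₁, h₂⟩ := coeff_eq_zero_of_eventually_quartic_eq_zero
    (c₀ := C (B A A) (B A A) η - 8 * f A * η A)
    (c₁ := 4 * C (B A A) (B A x) η - 8 * (f A * η x + B A A x / 2 * η A))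
    (c₂ := 4 * C (B A x) (B A x) η + 2 * C (B A A) (B x x) η -
      8 * (B A A x / 2 * η x + B A x x / 2 * η A))
    (c₃ := 4 * C (B A x) (B x x) η - 8 * (B A x x / 2 * η x + f x * η A))
    (c₄ := C (B x x) (B x x) η - 8 * f x * η x) (by
      filter_upwards [hev] with t ht
      have hk := key _ ht η
      rw [Bf] at hk
      rw [Bf A, Bf x]
      simp only [map_add, map_smul, add_apply,
        smul_apply, smul_eq_mul, hb₁, B₂ A x A, hb₂,
        hc₁ (B A x) (B A A), hc₁ (B x x) (B A A), hc₁ (B x x) (B A x)] at hk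
      linear_combination hk)
  exact ⟨sub_eq_zero.1 h₀, sub_eq_zero.1 h₁, sub_eq_zero.1 h₂⟩

/-- The derivative of `f'/f` at `A` carries `f` to `f_*` up to the factor `-f(A)⁻²`. -/
theorem legendre_fderiv_apply {f : V → ℂ} (hf : ContDiff ℂ ⊤ f)
    (hfhom : ∀ (c : ℂ) (x : V), f (c • x) = c ^ 3 * f x)
    {fstar : (V →L[ℂ] ℂ) → ℂ} (hfs : ContDiff ℂ ⊤ fstar)
    (hfshom : ∀ (c : ℂ) (ξ : V →L[ℂ] ℂ), fstar (c • ξ) = c ^ 3 * fstar ξ)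
    (hdef : ∀ x : V, f x ≠ 0 → fstar ((f x)⁻¹ • fderiv ℂ f x) = (f x)⁻¹)
    (hsurj : ∀ A : V, f A ≠ 0 →
      Function.Surjective (fderiv ℂ (fun x : V => (f x)⁻¹ • fderiv ℂ f x) A))
    {A : V} (hA : f A ≠ 0) (x : V) :
    fstar (fderiv ℂ (fun y : V => (f y)⁻¹ • fderiv ℂ f y) A x) = -(f A ^ 2)⁻¹ * f x := by
  obtain ⟨B, B₁, B₂, Bf, Bd, Bdd⟩ := exists_trilinear_of_cubic hf hfhom
  obtain ⟨C, C₁, C₂, Cf, Cd, -⟩ := exists_trilinear_of_cubic hfs hfshom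
  have df := hf.differentiable (by simp)
  have key : ∀ y, f y ≠ 0 → ∀ η : V →L[ℂ] ℂ, C (B y y) (B y y) η = 8 * f y * η y :=
    fun _ hy => legendre_gradient_apply hf hfs hdef hsurj B₂ Bf Bd Bdd Cd hy
  have coeffs := legendre_gradient_expansion hf.continuous B₁ B₂ Bf C₁ key hA x
  obtain ⟨-, hτ⟩ := fderiv_inv_smul_fderiv_apply df hA (Bdd A) x
  rw [hτ, Cf, Bd]
  simp only [map_sub, map_smul, sub_apply,
    smul_apply, smul_eq_mul]
  have caa := (coeffs (B A A)).1
  have caab := (coeffs (B A x)).1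
  have caac := (coeffs (B x x)).1
  have cabc := (coeffs (B x x)).2.1
  have cbba := (coeffs (B A A)).2.2
  have cbbb := (coeffs (B A x)).2.2
  have e₁ : C (B A A) (B A x) (B A A) = C (B A A) (B A A) (B A x) := C₂ _ _ _
  have e₂ : C (B A x) (B A A) (B A A) = C (B A A) (B A A) (B A x) := by rw [C₁, C₂]
  have e₃ : C (B A x) (B A A) (B A x) = C (B A x) (B A x) (B A A) := C₂ _ _ _
  have e₄ : C (B A A) (B A x) (B A x) = C (B A x) (B A x) (B A A) := by rw [C₁, C₂]
  have e₅ : C (B A A) (B x x) (B A A) = C (B A A) (B A A) (B x x) := C₂ _ _ _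
  have e₆ : C (B A A) (B x x) (B A x) = C (B A A) (B A x) (B x x) := C₂ _ _ _
  have e₇ : B A x A = B A A x := B₂ _ _ _
  have e₈ : B x x A = B A x x := by rw [B₂, B₁]
  have eA : B A A A = 6 * f A := by rw [Bf]; ring
  have ex : B x x x = 6 * f x := by rw [Bf]; ring
  rw [e₅] at cbba
  rw [e₆] at cbbb
  rw [e₁, e₂, e₃, e₄]
  rw [e₇] at caab cbbb
  rw [e₈] at caac cabc
  rw [eA] at caa cbba
  rw [ex] at cabc
  generalize B A A x = s at *
  generalize B A x x = r at *
  have v₁ : C (B A x) (B A x) (B A A) = 2 * f A * r + s ^ 2 := by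
    linear_combination cbba / 4 - caac / 2
  have v₂ : C (B A x) (B A x) (B A x) = 3 / 2 * s * r - 6 * f A * f x := by
    linear_combination cbbb / 4 - cabc / 8
  rw [caa, caab, v₁, v₂]
  field_simp
  ring

end Legendre

/-- Let `f` be a homogeneous cubic admitting a polynomial
multiplicative Legendre transform `f_*` (a homogeneous cubic on `V*` with
gradient `g`), with `f_*(f'(x)/f(x)) = 1/f(x)` and `(f_*'/f_*)∘(f'/f) = id` on
`{f ≠ 0}`; so `τ_{f,A} = d_A(f'/f)` is invertible with inverse
`τ_{f_*, f'(A)/f(A)}`.  Assuming (as one may) that each `τ_{f,A}` maps the cone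
over `{f = 0}` onto the cone over `{f_* = 0}`, for any `A, A'` with
`f(A) ≠ 0 ≠ f(A')` the composite `(τ_{f,A'})⁻¹ ∘ τ_{f,A} ∈ GL(V)` lies in the
group `G = {g : f ∘ g = χ(g)·f, χ(g) ≠ 0}`, i.e. preserves the affine cone over
`{f = 0}`. -/
theorem stmt18 {V : Type*} [NormedAddCommGroup V] [NormedSpace ℂ V]
    [FiniteDimensional ℂ V]
    (f : V → ℂ) (hf : ContDiff ℂ ⊤ f)
    (hfhom : ∀ (c : ℂ) (x : V), f (c • x) = c ^ 3 * f x)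
    (fstar : (V →L[ℂ] ℂ) → ℂ) (hfs : ContDiff ℂ ⊤ fstar)
    (hfshom : ∀ (c : ℂ) (ξ : V →L[ℂ] ℂ), fstar (c • ξ) = c ^ 3 * fstar ξ)
    (g : (V →L[ℂ] ℂ) → V) (hg : ContDiff ℂ ⊤ g)
    (hghom : ∀ (c : ℂ) (ξ : V →L[ℂ] ℂ), g (c • ξ) = c ^ 2 • g ξ)
    (hdef : ∀ x : V, f x ≠ 0 → fstar ((f x)⁻¹ • fderiv ℂ f x) = (f x)⁻¹)
    (hlog : ∀ x : V, f x ≠ 0 →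
      (fstar ((f x)⁻¹ • fderiv ℂ f x))⁻¹ • g ((f x)⁻¹ • fderiv ℂ f x) = x)
    (hinv : ∀ A : V, f A ≠ 0 →
      (fderiv ℂ (fun ξ : V →L[ℂ] ℂ => (fstar ξ)⁻¹ • g ξ)
          ((f A)⁻¹ • fderiv ℂ f A)).comp
        (fderiv ℂ (fun x : V => (f x)⁻¹ • fderiv ℂ f x) A)
        = ContinuousLinearMap.id ℂ V)
    (hcone : ∀ A : V, f A ≠ 0 → ∀ x : V,
      f x = 0 ↔ fstar (fderiv ℂ (fun y : V => (f y)⁻¹ • fderiv ℂ f y) A x) = 0) :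
    ∀ A A' : V, f A ≠ 0 → f A' ≠ 0 →
      ∃ χ : ℂ, χ ≠ 0 ∧ ∀ x : V,
        f ((fderiv ℂ (fun ξ : V →L[ℂ] ℂ => (fstar ξ)⁻¹ • g ξ)
              ((f A')⁻¹ • fderiv ℂ f A'))
            (fderiv ℂ (fun y : V => (f y)⁻¹ • fderiv ℂ f y) A x))
          = χ * f x := by
  intro A A' hA hA'
  have hfin : Module.finrank ℂ V = Module.finrank ℂ (V →L[ℂ] ℂ) := by
    rw [← LinearMap.toContinuousLinearMap.finrank_eq]
    exact Subspace.dual_finrank_eq.symm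
  have hinj : ∀ A : V, f A ≠ 0 →
      Function.Injective (fderiv ℂ (fun x : V => (f x)⁻¹ • fderiv ℂ f x) A) := fun A hA =>
    Function.LeftInverse.injective fun v => DFunLike.congr_fun (hinv A hA) v
  have hsurj : ∀ A : V, f A ≠ 0 →
      Function.Surjective (fderiv ℂ (fun x : V => (f x)⁻¹ • fderiv ℂ f x) A) := fun A hA =>
    (LinearMap.injective_iff_surjective_of_finrank_eq_finrank hfin
      (f := (fderiv ℂ (fun x : V => (f x)⁻¹ • fderiv ℂ f x) A).toLinearMap)).1 (hinj A hA)
  refine ⟨f A' ^ 2 * (f A ^ 2)⁻¹, by positivity, fun x => ?_⟩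
  have hx := legendre_fderiv_apply hf hfhom hfs hfshom hdef hsurj hA x
  obtain ⟨w, hw⟩ := hsurj A' hA' (fderiv ℂ (fun y : V => (f y)⁻¹ • fderiv ℂ f y) A x)
  have hw' := legendre_fderiv_apply hf hfhom hfs hfshom hdef hsurj hA' w
  rw [hw, hx] at hw'
  rw [← hw, ← ContinuousLinearMap.comp_apply, hinv A' hA', ContinuousLinearMap.id_apply]
  field_simp at hw' ⊢
  linear_combination hw'
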